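/- arXiv:1504.07594 — 2 statements merged into one kernel-verified Lean document; each statement's English description precedes it below -/
import Mathlib

section
/- If the comma category K = Comma(𝟭_{A₂}, F₁₂) is hereditary, then for every epimorphism p : E₁ ⟶ E₁' between injective objects of A₁, the morphism F₁₂(p) : F₁₂(E₁) ⟶ F₁₂(E₁') is a split epimorphism. -/
/-!
STATEMENT 10: If the comma category `K = Comma(𝟭 A₂, F₁₂)` is hereditary, then for
every epimorphism `p : E₁ ⟶ E₁'` between injective objects of `A₁`, the morphism
`F₁₂(p)` is a split epimorphism.
-/

open CategoryTheory Limits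

universe v₁ v₂ u₁ u₂

/-- A category is hereditary if for every epimorphism `e : E ⟶ X` with `E` injective,
`X` is also injective. -/
def Hereditary (C : Type*) [CategoryTheory.Category C] : Prop :=
  ∀ ⦃E X : C⦄ (e : E ⟶ X), CategoryTheory.Epi e →
    CategoryTheory.Injective E → CategoryTheory.Injective X

/-!
The projection `Comma (𝟭 A₂) F ⥤ A₁` has a left adjoint `W ↦ (⊥ ⟶ F W)` and a right adjoint
`W ↦ (𝟙 : F W ⟶ F W)`. The left adjoint makes the projection preserve monomorphisms, so the right
adjoint sends an injective `E` to an injective. Its quotient `(F p : F E ⟶ F E')` is then injective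
as well, because the comma category is hereditary. But the structure morphism `d` of an injective
`X = (d : X₂ ⟶ F X₁)` splits: extend `(⊥ ⟶ F X₁) ⟶ X` along the monomorphism from `(⊥ ⟶ F X₁)` to
`(𝟙 : F X₁ ⟶ F X₁)`, and the left component of the extension is a section of `d`.
-/

section Components

variable {A B T : Type*} [Category* A] [Category* B] [Category* T] {L : A ⥤ T} {R : B ⥤ T}
  {X Y : Comma L R}

theorem comma_mono_of_mono_left_of_mono_right (f : X ⟶ Y) [Mono f.left] [Mono f.right] :
    Mono f where
  right_cancellation _ _ h := CommaMorphism.ext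
    ((cancel_mono f.left).1 (congrArg CommaMorphism.left h))
    ((cancel_mono f.right).1 (congrArg CommaMorphism.right h))

theorem comma_epi_of_epi_left_of_epi_right (f : X ⟶ Y) [Epi f.left] [Epi f.right] :
    Epi f where
  left_cancellation _ _ h := CommaMorphism.ext
    ((cancel_epi f.left).1 (congrArg CommaMorphism.left h))
    ((cancel_epi f.right).1 (congrArg CommaMorphism.right h))

end Components

section Adjoints

variable {A₁ : Type u₁} [Category.{v₁} A₁] {A₂ : Type u₂} [Category.{v₂} A₂] (F : A₁ ⥤ A₂)

/-- The cofree object functor `W ↦ (𝟙 : F W ⟶ F W)`, right adjoint to the projection of the comma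
category to `A₁`. -/
def cofreeComma : A₁ ⥤ Comma (𝟭 A₂) F where
  obj W := ⟨F.obj W, W, 𝟙 (F.obj W)⟩
  map f := { left := F.map f, right := f }

/-- The adjunction between the projection of the comma category to `A₁` and the cofree object
functor. The transpose of `g : X₁ ⟶ W` has left component `F g ∘ d_X`. -/
def sndAdjCofreeComma : Comma.snd (𝟭 A₂) F ⊣ cofreeComma F :=
  Adjunction.mkOfHomEquiv
    { homEquiv X W :=
        { toFun g := { left := X.hom ≫ F.map g, right := g, w := Category.comp_id _ }
          invFun f := f.right
          left_inv _ := rfl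
          right_inv f := CommaMorphism.ext (f.w.symm.trans (Category.comp_id f.left)) rfl }
      homEquiv_naturality_right {X _ _} f g := CommaMorphism.ext
        ((X.hom ≫= F.map_comp f g).trans (Category.assoc _ _ _).symm) rfl }

variable [HasInitial A₂]

/-- The free object functor `W ↦ (⊥ ⟶ F W)`, left adjoint to the projection of the comma category
to `A₁`. -/
noncomputable def freeComma : A₁ ⥤ Comma (𝟭 A₂) F where
  obj W := ⟨⊥_ A₂, W, initial.to (F.obj W)⟩
  map f := { left := 𝟙 (⊥_ A₂), right := f }

/-- The adjunction between the free object functor and the projection of the comma category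
to `A₁`. -/
noncomputable def freeCommaAdjSnd : freeComma F ⊣ Comma.snd (𝟭 A₂) F :=
  Adjunction.mkOfHomEquiv
    { homEquiv W X :=
        { toFun f := f.right
          invFun g := { left := initial.to X.left, right := g, w := initialIsInitial.hom_ext _ _ }
          left_inv f := CommaMorphism.ext (initialIsInitial.hom_ext _ _) rfl
          right_inv _ := rfl }
      homEquiv_naturality_left_symm _ _ := CommaMorphism.ext (initialIsInitial.hom_ext _ _) rfl }

theorem injective_cofreeComma_obj (E : A₁) [Injective E] : Injective ((cofreeComma F).obj E) :=
  have : (Comma.snd (𝟭 A₂) F).PreservesMonomorphisms :=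
    Functor.preservesMonomorphisms_of_adjunction (freeCommaAdjSnd F)
  Injective.injective_of_adjoint (sndAdjCofreeComma F) E

variable {F}

theorem isSplitEpi_comma_hom_of_injective [InitialMonoClass A₂] (X : Comma (𝟭 A₂) F)
    [Injective X] : IsSplitEpi X.hom := by
  let ι : (freeComma F).obj X.right ⟶ (cofreeComma F).obj X.right :=
    { left := initial.to (F.obj X.right), right := 𝟙 X.right, w := initialIsInitial.hom_ext _ _ }
  have : Mono ι.left := inferInstanceAs (Mono (initial.to (F.obj X.right)))
  have : Mono ι.right := inferInstanceAs (Mono (𝟙 X.right))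
  have : Mono ι := comma_mono_of_mono_left_of_mono_right ι
  let s : (cofreeComma F).obj X.right ⟶ X :=
    Injective.factorThru ((freeCommaAdjSnd F).counit.app X) ι
  let σ : F.obj X.right ⟶ X.left := s.left
  let ρ : X.right ⟶ X.right := s.right
  have ρ_eq_id : ρ = 𝟙 X.right := calc
    ρ = 𝟙 X.right ≫ ρ := (Category.id_comp ρ).symm
    _ = 𝟙 X.right := congrArg CommaMorphism.right
      (Injective.comp_factorThru ((freeCommaAdjSnd F).counit.app X) ι)
  have σ_hom : σ ≫ X.hom = 𝟙 (F.obj X.right) := calc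
    σ ≫ X.hom = 𝟙 (F.obj X.right) ≫ F.map ρ := s.w
    _ = 𝟙 (F.obj X.right) := by rw [ρ_eq_id, F.map_id, Category.comp_id]
  exact ⟨⟨⟨σ, σ_hom⟩⟩⟩

theorem stmt_10_general [InitialMonoClass A₂] (hK : Hereditary (Comma (𝟭 A₂) F)) {E E' : A₁}
    (p : E ⟶ E') [Epi p] [Injective E] : IsSplitEpi (F.map p) := by
  let X : Comma (𝟭 A₂) F := ⟨F.obj E, E', F.map p⟩
  let q : (cofreeComma F).obj E ⟶ X := { left := 𝟙 (F.obj E), right := p }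
  have : Epi q.left := inferInstanceAs (Epi (𝟙 (F.obj E)))
  have : Epi q.right := inferInstanceAs (Epi p)
  have : Epi q := comma_epi_of_epi_left_of_epi_right q
  have : Injective X := hK q inferInstance (injective_cofreeComma_obj F E)
  exact isSplitEpi_comma_hom_of_injective X

end Adjoints

theorem stmt_10 {A₁ : Type u₁} [Category.{v₁} A₁] [Abelian A₁] [EnoughInjectives A₁]
    {A₂ : Type u₂} [Category.{v₂} A₂] [Abelian A₂] [EnoughInjectives A₂]
    (F : A₁ ⥤ A₂) [F.Additive] [PreservesFiniteLimits F]
    (hK : Hereditary (Comma (𝟭 A₂) F)) :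
    ∀ (E₁ E₁' : A₁) (p : E₁ ⟶ E₁'), Epi p → Injective E₁ → Injective E₁' →
      IsSplitEpi (F.map p) :=
  fun _ _ p _ _ _ => stmt_10_general hK p
end

section
/- If the comma category K = Comma(𝟭_{A₂}, F₁₂) is hereditary, then both A₁ and A₂ are hereditary. -/
/-!
STATEMENT 11: If the comma category `K = Comma(𝟭 A₂, F₁₂)` is hereditary, then both
`A₁` and `A₂` are hereditary.
-/

open CategoryTheory Limits

universe v₁ v₂ u₁ u₂

/-!
Write objects of `Comma L R` as triples `(a, b, L a ⟶ R b)`. The projections have adjoints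
`(⊥, -) ⊣ snd ⊣ (G R -, -)`, where `L ⊣ G`, and `fst ⊣ (-, ⊤)`; moreover both projections preserve
monomorphisms, so the right adjoints `(-, ⊤)` and `(G R -, -)` preserve injectives.

* An epimorphism `E ⟶ X` of `A` with `E` injective yields the epimorphism `(E, ⊤) ⟶ (X, ⊤)`, so
  `(X, ⊤)` is injective, and hence so is `X` because `(-, ⊤)` is fully faithful.
* An epimorphism `E ⟶ X` of `B` with `E` injective yields the epimorphism
  `(G R E, E) ⟶ (G R E, X)`, whose target is therefore injective; so is its image `X` under `snd`,
  since the left adjoint `(⊥, -)` of `snd` preserves monomorphisms.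

Taking `L = G = 𝟭 A₂` and `R = F` gives the statement for `A₂ = A` and `A₁ = B`.
-/

section Comma

variable {A B T : Type*} [Category* A] [Category* B] [Category* T] {L : A ⥤ T} {R : B ⥤ T}

lemma comma_mono_of_mono_left_right {X Y : Comma L R} (f : X ⟶ Y) [Mono f.left] [Mono f.right] :
    Mono f where
  right_cancellation g h w := by
    ext
    · exact (cancel_mono f.left).1 (congrArg CommaMorphism.left w)
    · exact (cancel_mono f.right).1 (congrArg CommaMorphism.right w)

lemma comma_epi_of_epi_left_right {X Y : Comma L R} (f : X ⟶ Y) [Epi f.left] [Epi f.right] :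
    Epi f where
  left_cancellation g h w := by
    ext
    · exact (cancel_epi f.left).1 (congrArg CommaMorphism.left w)
    · exact (cancel_epi f.right).1 (congrArg CommaMorphism.right w)

instance comma_fst_preservesMonomorphisms [(Comma.snd L R).PreservesMonomorphisms]
    [R.PreservesMonomorphisms] : (Comma.fst L R).PreservesMonomorphisms where
  preserves {X Y} f _ := ⟨fun {W} g h (w : g ≫ f.left = h ≫ f.left) => by
    have mono_right : Mono f.right := (Comma.snd L R).map_mono f
    have comp_hom_eq : L.map g ≫ X.hom = L.map h ≫ X.hom := by
      rw [← cancel_mono (R.map f.right), Category.assoc, Category.assoc, ← f.w,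
        ← L.map_comp_assoc, ← L.map_comp_assoc, w]
    -- Since the two composites agree, `g` and `h` both underlie morphisms from one object over
    -- `X.right`.
    let source : Comma L R := ⟨W, X.right, L.map g ≫ X.hom⟩
    let liftG : source ⟶ X := { left := g, right := 𝟙 X.right }
    let liftH : source ⟶ X := { left := h, right := 𝟙 X.right, w := by simp [source, comp_hom_eq] }
    have lifts_eq : liftG = liftH := (cancel_mono f).1 (Comma.hom_ext _ _ w rfl)
    exact congrArg CommaMorphism.left lifts_eq⟩

section InitialLeft

variable [HasInitial A] [PreservesColimit (Functor.empty.{0} A) L]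

variable (L R) in
/-- The functor `b ↦ (⊥, b)`, where the structure map is the unique one out of the initial object
`L ⊥`. It exhibits `Comma.snd` as a right adjoint. -/
noncomputable def commaInitialLeft : B ⥤ Comma L R where
  obj b := ⟨⊥_ A, b, (initialIsInitial.isInitialObj L _).to _⟩
  map f := { left := 𝟙 _, right := f, w := (initialIsInitial.isInitialObj L _).hom_ext _ _ }

/-- A morphism `(⊥, b) ⟶ Y` is the same as a morphism `b ⟶ Y.right`. -/
noncomputable def commaInitialLeftAdjSnd : commaInitialLeft L R ⊣ Comma.snd L R :=
  .mkOfHomEquiv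
    { homEquiv b Y :=
        { toFun f := f.right
          invFun g :=
            { left := initial.to _
              right := g
              w := (initialIsInitial.isInitialObj L _).hom_ext _ _ }
          left_inv _ := Comma.hom_ext _ _ (initial.hom_ext _ _) rfl
          right_inv _ := rfl }
      homEquiv_naturality_left_symm _ _ := Comma.hom_ext _ _ (initial.hom_ext _ _) rfl }

instance commaInitialLeft_preservesMonomorphisms :
    (commaInitialLeft L R).PreservesMonomorphisms where
  preserves f _ := by
    have : Mono ((commaInitialLeft L R).map f).left := inferInstanceAs (Mono (𝟙 (⊥_ A)))
    have : Mono ((commaInitialLeft L R).map f).right := inferInstanceAs (Mono f)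
    exact comma_mono_of_mono_left_right _

instance comma_snd_preservesMonomorphisms : (Comma.snd L R).PreservesMonomorphisms :=
  Functor.preservesMonomorphisms_of_adjunction commaInitialLeftAdjSnd

instance comma_snd_preservesInjectiveObjects : (Comma.snd L R).PreservesInjectiveObjects :=
  Functor.preservesInjectiveObjects_of_adjunction_of_preservesMonomorphisms commaInitialLeftAdjSnd

end InitialLeft

section TerminalRight

variable [HasTerminal B] [PreservesLimit (Functor.empty.{0} B) R]

variable (L R) in
/-- The functor `a ↦ (a, ⊤)`, where the structure map is the unique one into the terminal object
`R ⊤`. It is a fully faithful right adjoint of `Comma.fst`. -/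
noncomputable def commaTerminalRight : A ⥤ Comma L R where
  obj a := ⟨a, ⊤_ B, (terminalIsTerminal.isTerminalObj R _).from _⟩
  map f := { left := f, right := 𝟙 _, w := (terminalIsTerminal.isTerminalObj R _).hom_ext _ _ }

/-- A morphism `X ⟶ (a, ⊤)` is the same as a morphism `X.left ⟶ a`. -/
noncomputable def commaFstAdjTerminalRight : Comma.fst L R ⊣ commaTerminalRight L R :=
  .mkOfHomEquiv
    { homEquiv X a :=
        { toFun f :=
            { left := f
              right := terminal.from _
              w := (terminalIsTerminal.isTerminalObj R _).hom_ext _ _ }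
          invFun g := g.left
          left_inv _ := rfl
          right_inv _ := Comma.hom_ext _ _ rfl (terminal.hom_ext _ _) }
      homEquiv_naturality_right _ _ := Comma.hom_ext _ _ rfl (terminal.hom_ext _ _) }

instance commaTerminalRight_full : (commaTerminalRight L R).Full where
  map_surjective f := ⟨f.left, Comma.hom_ext _ _ rfl (terminal.hom_ext _ _)⟩

instance commaTerminalRight_faithful : (commaTerminalRight L R).Faithful where
  map_injective w := congrArg CommaMorphism.left w

instance commaTerminalRight_preservesEpimorphisms :
    (commaTerminalRight L R).PreservesEpimorphisms where
  preserves f _ := by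
    have : Epi ((commaTerminalRight L R).map f).left := inferInstanceAs (Epi f)
    have : Epi ((commaTerminalRight L R).map f).right := inferInstanceAs (Epi (𝟙 (⊤_ B)))
    exact comma_epi_of_epi_left_right _

end TerminalRight

section Cofree

variable {G : T ⥤ A}

/-- The functor `b ↦ (G R b, b)`, where the structure map `L G R b ⟶ R b` is the counit of
`L ⊣ G`. It is a right adjoint of `Comma.snd`. -/
def commaCofree (adj : L ⊣ G) (R : B ⥤ T) : B ⥤ Comma L R where
  obj b := ⟨G.obj (R.obj b), b, adj.counit.app (R.obj b)⟩
  map f := { left := G.map (R.map f), right := f }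

lemma commaCofree_hom_ext (adj : L ⊣ G) {X : Comma L R} {b : B}
    {g h : X ⟶ (commaCofree adj R).obj b} (w : g.right = h.right) : g = h := by
  have transpose_left (k : X ⟶ (commaCofree adj R).obj b) :
      (adj.homEquiv X.left (R.obj b)).symm k.left = X.hom ≫ R.map k.right :=
    (adj.homEquiv_counit _ _ _).trans k.w
  refine Comma.hom_ext _ _ ((adj.homEquiv X.left (R.obj b)).symm.injective ?_) w
  rw [transpose_left g, transpose_left h, w]

/-- A morphism `X ⟶ (G R b, b)` is the same as a morphism `X.right ⟶ b`. -/
def commaSndAdjCofree (adj : L ⊣ G) : Comma.snd L R ⊣ commaCofree adj R :=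
  .mkOfHomEquiv
    { homEquiv X b :=
        { toFun f :=
            { left := adj.homEquiv X.left (R.obj b) (X.hom ≫ R.map f)
              right := f
              w := (adj.homEquiv_counit _ _ _).symm.trans ((adj.homEquiv _ _).symm_apply_apply _) }
          invFun g := g.right
          left_inv _ := rfl
          right_inv _ := commaCofree_hom_ext adj rfl }
      homEquiv_naturality_right _ _ := commaCofree_hom_ext adj rfl }

end Cofree

namespace Hereditary

theorem of_adjunction {C D : Type*} [Category* C] [Category* D] {U : C ⥤ D} {V : D ⥤ C}
    (adj : U ⊣ V) [U.PreservesMonomorphisms] [V.Full] [V.Faithful] [V.PreservesEpimorphisms]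
    (hC : Hereditary C) : Hereditary D := fun E X e _ hE =>
  adj.injective_of_map_injective X <|
    hC (V.map e) inferInstance (adj.map_injective E hE)

theorem left_of_comma [HasInitial A] [PreservesColimit (Functor.empty.{0} A) L]
    [HasTerminal B] [PreservesLimit (Functor.empty.{0} B) R] [R.PreservesMonomorphisms]
    (hK : Hereditary (Comma L R)) : Hereditary A :=
  hK.of_adjunction commaFstAdjTerminalRight

theorem right_of_comma [HasInitial A] [L.IsLeftAdjoint] (hK : Hereditary (Comma L R)) :
    Hereditary B := by
  intro E X e _ hE
  let adj := Adjunction.ofIsLeftAdjoint L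
  let cofreeE : Comma L R := (commaCofree adj R).obj E
  let target : Comma L R := ⟨cofreeE.left, X, cofreeE.hom ≫ R.map e⟩
  let q : cofreeE ⟶ target := { left := 𝟙 _, right := e }
  have epi_q : Epi q := by
    have : Epi q.left := inferInstanceAs (Epi (𝟙 _))
    have : Epi q.right := inferInstanceAs (Epi e)
    exact comma_epi_of_epi_left_right q
  have injective_cofreeE : Injective cofreeE := (commaSndAdjCofree adj).map_injective E hE
  have injective_target : Injective target := hK q epi_q injective_cofreeE
  exact (Comma.snd L R).injective_obj target

end Hereditary

theorem stmt_11_general [HasInitial A] [HasTerminal B] (L : A ⥤ T) [L.IsLeftAdjoint] (R : B ⥤ T)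
    [PreservesLimit (Functor.empty.{0} B) R] [R.PreservesMonomorphisms]
    (hK : Hereditary (Comma L R)) : Hereditary B ∧ Hereditary A :=
  ⟨hK.right_of_comma, hK.left_of_comma⟩

end Comma

theorem stmt_11 {A₁ : Type u₁} [Category.{v₁} A₁] [Abelian A₁] [EnoughInjectives A₁]
    {A₂ : Type u₂} [Category.{v₂} A₂] [Abelian A₂] [EnoughInjectives A₂]
    (F : A₁ ⥤ A₂) [F.Additive] [PreservesFiniteLimits F]
    (hK : Hereditary (Comma (𝟭 A₂) F)) :
    Hereditary A₁ ∧ Hereditary A₂ :=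
  stmt_11_general (𝟭 A₂) F hK
end
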